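/- arXiv:1202.4702 — 3 statements merged into one kernel-verified Lean document; each statement's English description precedes it below -/
import Mathlib

section
/- Let {U(t)}_{t∈[0,1]} be a norm-continuous family of unitary operators on a complex separable Hilbert space H such that U(t) − I is compact for all t ∈ [0,1]. Then there exist points 0 = t₀ < t₁ < ⋯ < t_n = 1 and angles θ₁, …, θ_n ∈ (0,2π) such that for each j = 1, …, n one has e^{iθ_j} ∉ σ(U(t)) for all t ∈ [t_{j−1}, t_j]. -/
open Complex Real

lemma aux_eigvec {H : Type*} [NormedAddCommGroup H] [InnerProductSpace ℂ H] [CompleteSpace H]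
    (U : H →L[ℂ] H) (hc : IsCompactOperator ⇑(U - 1)) (μ : ℂ) (hμ : μ ≠ 1)
    (h : μ ∈ spectrum ℂ U) : ∃ v : H, ‖v‖ = 1 ∧ U v = μ • v := by
  have h1 : μ - 1 ∈ spectrum ℂ (U - 1) := by
    rw [spectrum.mem_iff] at h ⊢
    convert h using 2
    rw [map_sub, map_one]
    abel
  have h2 := (hc.hasEigenvalue_iff_mem_spectrum (sub_ne_zero.2 hμ)).2 h1
  obtain ⟨w, hw⟩ := h2.exists_hasEigenvector
  have hw0 : w ≠ 0 := hw.2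
  have hw1 : U w = μ • w := by
    have := hw.apply_eq_smul
    simp only [ContinuousLinearMap.coe_coe, ContinuousLinearMap.sub_apply,
      ContinuousLinearMap.one_apply, sub_smul, one_smul] at this
    exact sub_left_injective this
  refine ⟨((‖w‖⁻¹ : ℝ) : ℂ) • w, ?_, ?_⟩
  · rw [norm_smul]
    simp [hw0]
  · rw [map_smul, hw1, smul_comm]

lemma aux_exp_inj {a b : ℝ} (ha : a ∈ Set.Ioo 0 (2 * π)) (hb : b ∈ Set.Ioo 0 (2 * π))
    (h : Complex.exp ((a : ℂ) * I) = Complex.exp ((b : ℂ) * I)) : a = b := by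
  have := Circle.exp_injOn_Ico (a := 0) (b := 2 * π) (by simp)
  exact this ⟨ha.1.le, ha.2⟩ ⟨hb.1.le, hb.2⟩ (by ext; simpa using h)

lemma aux_exp_ne {a : ℝ} (ha : a ∈ Set.Ioo 0 (2 * π)) :
    Complex.exp ((a : ℂ) * I) ≠ 1 := by
  intro h
  have := Circle.exp_injOn_Ico (a := 0) (b := 2 * π) (by simp)
  have h0 := this ⟨ha.1.le, ha.2⟩ ⟨le_rfl, Real.two_pi_pos⟩ (by ext; simpa using h)
  exact ha.1.ne' h0

lemma aux_exists_angle {H : Type*} [NormedAddCommGroup H] [InnerProductSpace ℂ H]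
    [CompleteSpace H] [TopologicalSpace.SeparableSpace H]
    (U : H →L[ℂ] H) (hu : U ∈ unitary (H →L[ℂ] H)) (hc : IsCompactOperator ⇑(U - 1)) :
    ∃ θ ∈ Set.Ioo 0 (2 * π), Complex.exp ((θ : ℂ) * I) ∉ spectrum ℂ U := by
  by_contra! hcon
  have key : ∀ θ : Set.Ioo 0 (2 * π), ∃ v : H, ‖v‖ = 1 ∧
      U v = Complex.exp (((θ : ℝ) : ℂ) * I) • v :=
    fun θ => aux_eigvec U hc _ (aux_exp_ne θ.2) (hcon θ θ.2)
  choose v hv1 hv2 using key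
  have hinner : ∀ x y : H, inner ℂ (U x) (U y) = inner ℂ x y := by
    intro x y
    rw [← ContinuousLinearMap.adjoint_inner_right]
    have := congrArg (fun T : H →L[ℂ] H => T y) (Unitary.mem_iff.1 hu).1
    simp only [ContinuousLinearMap.star_eq_adjoint, ContinuousLinearMap.mul_apply,
      ContinuousLinearMap.one_apply] at this
    rw [this]
  have horth : ∀ a b, a ≠ b → inner ℂ (v a) (v b) = 0 := by
    intro a b hab
    by_contra h0
    have h1 := hinner (v a) (v b)
    rw [hv2, hv2, inner_smul_left, inner_smul_right, ← mul_assoc] at h1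
    have h2 := mul_right_cancel₀ h0 (h1.trans (one_mul _).symm)
    apply hab
    apply Subtype.ext
    apply aux_exp_inj a.2 b.2
    rw [← Complex.exp_conj, ← Complex.exp_add] at h2
    simp only [map_mul, conj_ofReal, conj_I] at h2
    rw [Complex.exp_eq_exp_iff_exp_sub_eq_one, ← inv_inj, ← Complex.exp_neg, inv_one, ← h2]
    congr 1
    ring
  have hdist : ∀ a b, a ≠ b → 1 ≤ dist (v a) (v b) := by
    intro a b hab
    have h3 := norm_sub_sq (𝕜 := ℂ) (v a) (v b)
    rw [horth a b hab, hv1, hv1] at h3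
    simp at h3
    rw [dist_eq_norm]
    nlinarith [norm_nonneg (v a - v b)]
  have hcount : Countable (Set.Ioo 0 (2 * π)) := by
    apply Pairwise.countable_of_isOpen_disjoint (s := fun a => Metric.ball (v a) (1/2))
    · intro a b hab
      apply Metric.ball_disjoint_ball
      have := hdist a b hab
      linarith
    · intro a
      exact Metric.isOpen_ball
    · intro a
      exact ⟨v a, Metric.mem_ball_self (by norm_num)⟩
  have := Cardinal.Real.Ioo_countable_iff.1 (Set.countable_coe_iff.1 hcount)
  linarith [Real.two_pi_pos]


open Complex Real

/-- For any norm-continuous family of unitaries `{U(t)}_{t∈[0,1]}` on a complex separable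
Hilbert space with `U(t) - I` compact, there exist points `0 = t₀ < t₁ < ⋯ < tₙ = 1` and
angles `θ₁, …, θₙ ∈ (0,2π)` such that for each `j`, the point `e^{iθⱼ}` lies outside the
spectrum of `U(t)` for all `t ∈ [t_{j-1}, t_j]`. -/
theorem exists_partition_avoiding_spectrum
    {H : Type*} [NormedAddCommGroup H] [InnerProductSpace ℂ H] [CompleteSpace H]
    [TopologicalSpace.SeparableSpace H]
    (U : ℝ → H →L[ℂ] H)
    (hUcont : ContinuousOn U (Set.Icc 0 1))
    (hUuni : ∀ t ∈ Set.Icc (0:ℝ) 1, U t ∈ unitary (H →L[ℂ] H))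
    (hUcpt : ∀ t ∈ Set.Icc (0:ℝ) 1, IsCompactOperator ⇑(U t - 1)) :
    ∃ (n : ℕ) (t : Fin (n + 1) → ℝ) (θ : Fin n → ℝ),
      StrictMono t ∧ t 0 = 0 ∧ t (Fin.last n) = 1 ∧
      ∀ j : Fin n, θ j ∈ Set.Ioo 0 (2 * π) ∧
        ∀ s ∈ Set.Icc (t j.castSucc) (t j.succ),
          Complex.exp ((θ j : ℂ) * Complex.I) ∉ spectrum ℂ (U s) := by
  set V : ℝ → H →L[ℂ] H := fun t => U (Set.projIcc (0:ℝ) 1 zero_le_one t) with hV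
  have hVc : Continuous V :=
    (continuousOn_iff_continuous_restrict.1 hUcont).comp continuous_projIcc
  have hVU : ∀ t ∈ Set.Icc (0:ℝ) 1, V t = U t := by
    intro t ht
    simp only [hV, Set.projIcc_of_mem zero_le_one ht]
  obtain ⟨δ, hδ, hcov⟩ := lebesgue_number_lemma_of_metric (s := Set.Icc (0:ℝ) 1)
    (c := fun θ : Set.Ioo 0 (2 * π) =>
      {t : ℝ | Complex.exp (((θ : ℝ) : ℂ) * Complex.I) ∉ spectrum ℂ (V t)})
    isCompact_Icc
    (by
      intro θ
      have : {t : ℝ | Complex.exp (((θ : ℝ) : ℂ) * Complex.I) ∉ spectrum ℂ (V t)} =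
          (fun t => algebraMap ℂ (H →L[ℂ] H) (Complex.exp (((θ : ℝ) : ℂ) * Complex.I)) - V t) ⁻¹'
            {x | IsUnit x} := by
        ext t
        simp [spectrum.mem_iff]
      rw [this]
      exact Units.isOpen.preimage (continuous_const.sub hVc))
    (by
      intro t ht
      obtain ⟨θ, hθ, h⟩ := aux_exists_angle (U t) (hUuni t ht) (hUcpt t ht)
      rw [← hVU t ht] at h
      exact Set.mem_iUnion.2 ⟨⟨θ, hθ⟩, h⟩)
  obtain ⟨m, hm⟩ := exists_nat_one_div_lt hδ
  have hm0 : (0:ℝ) < m + 1 := by positivity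
  have hmem : ∀ j : Fin (m + 1), ((j : ℕ) : ℝ) / (m + 1) ∈ Set.Icc (0:ℝ) 1 := by
    intro j
    refine ⟨by positivity, (div_le_one hm0).2 ?_⟩
    exact_mod_cast j.2.le
  choose θ hθ using fun j : Fin (m + 1) => hcov _ (hmem j)
  refine ⟨m + 1, fun j => ((j : ℕ) : ℝ) / (m + 1), fun j => θ j, ?_, by simp, ?_, ?_⟩
  · intro a b hab
    have : ((a : ℕ) : ℝ) < ((b : ℕ) : ℝ) := by exact_mod_cast hab
    exact div_lt_div_of_pos_right this hm0
  · simp only [Fin.val_last, Nat.cast_add, Nat.cast_one]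
    exact div_self hm0.ne'
  · intro j
    refine ⟨(θ j).2, fun s hs => ?_⟩
    obtain ⟨hs1, hs2⟩ := hs
    simp only [Fin.val_castSucc, Fin.val_succ, Nat.cast_add, Nat.cast_one] at hs1 hs2
    have hj := hmem j
    have hs01 : s ∈ Set.Icc (0:ℝ) 1 := by
      refine ⟨hj.1.trans hs1, hs2.trans ((div_le_one hm0).2 ?_)⟩
      exact_mod_cast j.2
    rw [← hVU s hs01]
    apply hθ j
    rw [Metric.mem_ball, Real.dist_eq, abs_of_nonneg (sub_nonneg.2 hs1)]
    rw [add_div] at hs2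
    linarith
end

section
/- Let A₁ and A₂ be bounded self-adjoint operators on a complex Hilbert space, and let λ ∈ ℝ be such that ε := dist(λ, σ(A₁)) > 0. Suppose that ‖(A₁ − (λ + iε))⁻¹ − (A₂ − (λ + iε))⁻¹‖ < 1/(2ε). Then λ ∉ σ(A₂). -/
open Complex

/-- A non-real shift of a self-adjoint operator is invertible. -/
lemma isUnit_sub_nonreal {H : Type*} [NormedAddCommGroup H] [InnerProductSpace ℂ H]
    [CompleteSpace H] (A : H →L[ℂ] H) (hA : IsSelfAdjoint A) (z : ℂ) (hz : z.im ≠ 0) :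
    IsUnit (A - z • (1 : H →L[ℂ] H)) := by
  have h : z ∉ spectrum ℂ A := fun h => hz (hA.im_eq_zero_of_mem_spectrum h)
  rw [spectrum.notMem_iff, Algebra.algebraMap_eq_smul_one] at h
  simpa using h.neg

/-- The resolvent bound at a real point. -/
lemma norm_inv_le {H : Type*} [NormedAddCommGroup H] [InnerProductSpace ℂ H]
    [CompleteSpace H] (A : H →L[ℂ] H) (hA : IsSelfAdjoint A) (lam ε : ℝ)
    (hε : ε = Metric.infDist ((lam : ℂ)) (spectrum ℂ A)) (hpos : 0 < ε)
    (u : (H →L[ℂ] H)ˣ) (hu : (u : H →L[ℂ] H) = A - (lam : ℂ) • (1 : H →L[ℂ] H)) :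
    ‖((u⁻¹ : (H →L[ℂ] H)ˣ) : H →L[ℂ] H)‖ ≤ 1 / ε := by
  have hsu : IsSelfAdjoint (u : H →L[ℂ] H) := by
    rw [hu]
    refine hA.sub (IsSelfAdjoint.smul ?_ (IsSelfAdjoint.one _))
    simp [isSelfAdjoint_iff]
  have hs : IsSelfAdjoint ((u⁻¹ : (H →L[ℂ] H)ˣ) : H →L[ℂ] H) := by
    have : star u = u := Units.ext hsu
    have h2 : star u⁻¹ = u⁻¹ := by rw [star_inv, this]
    exact congrArg Units.val h2
  have hle : spectralRadius ℂ ((u⁻¹ : (H →L[ℂ] H)ˣ) : H →L[ℂ] H) ≤ ENNReal.ofReal (1 / ε) := by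
    refine iSup₂_le fun k hk => ?_
    rw [← spectrum.map_inv, Set.mem_inv, hu, ← Algebra.algebraMap_eq_smul_one] at hk
    have hk' : k⁻¹ + lam ∈ spectrum ℂ A := by
      rw [spectrum.mem_iff] at hk ⊢
      convert hk using 2
      rw [map_add]; abel
    have hd := Metric.infDist_le_dist_of_mem (x := (lam : ℂ)) hk'
    rw [← hε, dist_eq_norm] at hd
    have h3 : ε ≤ ‖k‖⁻¹ := by simpa using hd
    have h4 : ‖k‖ ≤ 1 / ε := by
      rw [one_div]
      have := inv_anti₀ hpos h3
      simpa using this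
    rw [← enorm_eq_nnnorm, ← ofReal_norm]
    exact ENNReal.ofReal_le_ofReal h4
  rw [hs.spectralRadius_eq_nnnorm] at hle
  have := ENNReal.toReal_mono ENNReal.ofReal_ne_top hle
  rw [ENNReal.toReal_ofReal (by positivity)] at this
  simpa using this

/-- If `A₁, A₂` are bounded self-adjoint operators, `λ ∈ ℝ`, `ε = dist(λ, σ(A₁)) > 0`, and
`‖(A₁ - (λ+iε))⁻¹ - (A₂ - (λ+iε))⁻¹‖ < 1/(2ε)`, then `λ ∉ σ(A₂)`. -/
theorem not_mem_spectrum_of_resolvent_close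
    {H : Type*} [NormedAddCommGroup H] [InnerProductSpace ℂ H] [CompleteSpace H]
    (A₁ A₂ : H →L[ℂ] H) (hA₁ : IsSelfAdjoint A₁) (hA₂ : IsSelfAdjoint A₂)
    (lam ε : ℝ)
    (hε : ε = Metric.infDist ((lam : ℂ)) (spectrum ℂ A₁))
    (hεpos : 0 < ε)
    (hclose : ‖Ring.inverse (A₁ - ((lam : ℂ) + (ε : ℂ) * Complex.I) • (1 : H →L[ℂ] H))
        - Ring.inverse (A₂ - ((lam : ℂ) + (ε : ℂ) * Complex.I) • (1 : H →L[ℂ] H))‖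
      < 1 / (2 * ε)) :
    (lam : ℂ) ∉ spectrum ℂ A₂ := by
  have hε0 : (ε : ℂ) ≠ 0 := by exact_mod_cast hεpos.ne'
  have hI : Complex.I * Complex.I = -1 := Complex.I_mul_I
  have hz : ((lam : ℂ) + (ε : ℂ) * Complex.I).im ≠ 0 := by simpa using hεpos.ne'
  have h1 := isUnit_sub_nonreal A₁ hA₁ _ hz
  have h2 := isUnit_sub_nonreal A₂ hA₂ _ hz
  have hlam : (lam : ℂ) ∉ spectrum ℂ A₁ := fun h => by
    rw [Metric.infDist_zero_of_mem h] at hε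
    exact hεpos.ne' hε
  have hB : IsUnit (A₁ - (lam : ℂ) • (1 : H →L[ℂ] H)) := by
    rw [spectrum.notMem_iff, Algebra.algebraMap_eq_smul_one] at hlam
    simpa using hlam.neg
  obtain ⟨u, hu⟩ := hB
  have hbound := norm_inv_le A₁ hA₁ lam ε hε hεpos u hu
  obtain ⟨p, hp⟩ := h1
  obtain ⟨q, hq⟩ := h2
  rw [← hp, ← hq, Ring.inverse_unit, Ring.inverse_unit] at hclose
  have hpu : (p : H →L[ℂ] H) = u - ((ε : ℂ) * Complex.I) • (1 : H →L[ℂ] H) := by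
    rw [hp, hu, add_smul]; abel
  have hA2 : A₂ - (lam : ℂ) • (1 : H →L[ℂ] H)
      = q + ((ε : ℂ) * Complex.I) • (1 : H →L[ℂ] H) := by
    rw [hq, add_smul]; abel
  generalize hc : (ε : ℂ) * Complex.I = c at *
  have hcn : ‖c‖ = ε := by rw [← hc]; simp [abs_of_pos hεpos]
  set S : H →L[ℂ] H := ((u⁻¹ : (H →L[ℂ] H)ˣ) : H →L[ℂ] H) with hS
  set P : H →L[ℂ] H := ((p⁻¹ : (H →L[ℂ] H)ˣ) : H →L[ℂ] H) with hP
  set Q : H →L[ℂ] H := ((q⁻¹ : (H →L[ℂ] H)ˣ) : H →L[ℂ] H) with hQ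
  -- `V` inverts `1 + c P`, up to the factor `c`.
  set V : H →L[ℂ] H := c • ((1 : H →L[ℂ] H) - c • S) with hV
  have hVn : ‖V‖ ≤ 2 * ε := by
    have hone : ‖(1 : H →L[ℂ] H)‖ ≤ 1 := ContinuousLinearMap.norm_id_le
    have : ‖(1 : H →L[ℂ] H) - c • S‖ ≤ 1 + ε * (1 / ε) := by
      refine (norm_sub_le _ _).trans (add_le_add hone ?_)
      rw [norm_smul, hcn]
      gcongr
    rw [mul_one_div_cancel hεpos.ne'] at this
    rw [hV, norm_smul, hcn]
    nlinarith
  have huS : (u : H →L[ℂ] H) * S = 1 := u.mul_inv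
  have hSu : S * (u : H →L[ℂ] H) = 1 := u.inv_mul
  have hVp : (1 : H →L[ℂ] H) - c • S = S * p := by
    rw [hpu, mul_sub, hSu, mul_smul_comm, mul_one]
  have hVp' : (1 : H →L[ℂ] H) - c • S = p * S := by
    rw [hpu, sub_mul, huS, smul_mul_assoc, one_mul]
  have hpP : (p : H →L[ℂ] H) * P = 1 := p.mul_inv
  have hqQ : (q : H →L[ℂ] H) * Q = 1 := q.mul_inv
  have hup : (1 : H →L[ℂ] H) + c • P = u * P := by
    have : (u : H →L[ℂ] H) = p + c • (1 : H →L[ℂ] H) := by rw [hpu]; abel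
    rw [this, add_mul, hpP, smul_mul_assoc, one_mul]
  have hlt : ‖V * (P - Q)‖ < 1 := by
    refine (norm_mul_le _ _).trans_lt ?_
    calc ‖V‖ * ‖P - Q‖ ≤ 2 * ε * ‖P - Q‖ := by gcongr
      _ < 2 * ε * (1 / (2 * ε)) := by gcongr
      _ = 1 := by field_simp
  have hW : IsUnit (1 - V * (P - Q)) := (Units.oneSub _ hlt).isUnit
  have hkey : A₂ - (lam : ℂ) • (1 : H →L[ℂ] H)
      = q * (u * P) * (1 - V * (P - Q)) := by
    have e1 : (u : H →L[ℂ] H) * P * V = c • (1 : H →L[ℂ] H) := by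
      rw [hV, hVp', mul_smul_comm]
      congr 1
      have hPp : P * (p : H →L[ℂ] H) = 1 := p.inv_mul
      rw [mul_assoc, ← mul_assoc P, hPp, one_mul, huS]
    have e2 : (u * P) * (1 - V * (P - Q)) = 1 + c • Q := by
      rw [mul_sub, mul_one, ← mul_assoc, e1, ← hup, smul_mul_assoc, one_mul, smul_sub]
      abel
    rw [mul_assoc, e2, hA2, mul_add, mul_one, mul_smul_comm, hqQ]
  rw [spectrum.notMem_iff, Algebra.algebraMap_eq_smul_one]
  have : IsUnit (A₂ - (lam : ℂ) • (1 : H →L[ℂ] H)) := by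
    rw [hkey]
    exact (q.isUnit.mul (u.isUnit.mul (p⁻¹).isUnit)).mul hW
  simpa using this.neg
end

section
/- Let A be a bounded self-adjoint operator on a complex Hilbert space with 0 ∉ σ(A), and set ε = dist(0, σ(A)) > 0. Then the operator (A − iε)⁻¹ + (iε)⁻¹ I is invertible and ‖((A − iε)⁻¹ + (iε)⁻¹ I)⁻¹‖ ≤ 2ε. -/
open Complex

/-- Let `A` be a bounded self-adjoint operator on a complex Hilbert space with `0 ∉ σ(A)`,
and set `ε = dist(0, σ(A)) > 0`. Then `(A - iε)⁻¹ + (iε)⁻¹ I` is invertible and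
`‖((A - iε)⁻¹ + (iε)⁻¹ I)⁻¹‖ ≤ 2ε`. -/
theorem resolvent_combination_inverse_bound
    {H : Type*} [NormedAddCommGroup H] [InnerProductSpace ℂ H] [CompleteSpace H]
    (A : H →L[ℂ] H) (hA : IsSelfAdjoint A)
    (h0 : (0 : ℂ) ∉ spectrum ℂ A)
    (ε : ℝ) (hε : ε = Metric.infDist (0 : ℂ) (spectrum ℂ A)) (hεpos : 0 < ε) :
    IsUnit (Ring.inverse (A - ((ε : ℂ) * Complex.I) • (1 : H →L[ℂ] H))
        + ((ε : ℂ) * Complex.I)⁻¹ • (1 : H →L[ℂ] H))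
    ∧ ‖Ring.inverse (Ring.inverse (A - ((ε : ℂ) * Complex.I) • (1 : H →L[ℂ] H))
        + ((ε : ℂ) * Complex.I)⁻¹ • (1 : H →L[ℂ] H))‖ ≤ 2 * ε := by
  have hc0 : ((ε : ℂ) * Complex.I) ≠ 0 := by
    simp [hεpos.ne']
  have hcn : ‖((ε : ℂ) * Complex.I)‖ = ε := by
    simp [abs_of_pos hεpos]
  have hcs : ((ε : ℂ) * Complex.I) ∉ spectrum ℂ A := by
    intro h
    have h1 := hA.im_eq_zero_of_mem_spectrum h
    simp at h1
    exact hεpos.ne' h1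
  generalize hc : ((ε : ℂ) * Complex.I) = c at *
  obtain ⟨a, rfl⟩ : IsUnit A := spectrum.zero_notMem_iff ℂ |>.1 h0
  have hB : IsUnit ((a : H →L[ℂ] H) - c • (1 : H →L[ℂ] H)) := by
    have h1 := (spectrum.notMem_iff.1 hcs).neg
    rwa [neg_sub, Algebra.algebraMap_eq_smul_one] at h1
  obtain ⟨b, hb⟩ := hB
  have hinvn : ‖((a⁻¹ : (H →L[ℂ] H)ˣ) : H →L[ℂ] H)‖ ≤ ε⁻¹ := by
    have hsa : IsSelfAdjoint ((a⁻¹ : (H →L[ℂ] H)ˣ) : H →L[ℂ] H) := by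
      have h1 : IsSelfAdjoint a := Units.ext hA
      have h2 : IsSelfAdjoint a⁻¹ := h1.inv
      exact congrArg Units.val h2
    have hr := hsa.spectralRadius_eq_nnnorm
    have hle : spectralRadius ℂ ((a⁻¹ : (H →L[ℂ] H)ˣ) : H →L[ℂ] H)
        ≤ ((ε⁻¹).toNNReal : ENNReal) := by
      refine iSup₂_le fun k hk => ?_
      rw [← spectrum.map_inv, Set.mem_inv] at hk
      have h1 := Metric.infDist_le_dist_of_mem (x := (0 : ℂ)) hk
      rw [← hε, dist_zero_left, norm_inv] at h1
      have h2 := inv_anti₀ hεpos h1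
      rw [inv_inv] at h2
      rw [ENNReal.coe_le_coe]
      exact NNReal.le_toNNReal_of_coe_le h2
    rw [hr, ENNReal.coe_le_coe] at hle
    have := NNReal.coe_le_coe.2 hle
    rwa [Real.coe_toNNReal _ (inv_pos.2 hεpos).le] at this
  rw [← hb, Ring.inverse_unit]
  have hab : (a : H →L[ℂ] H) = b + c • (1 : H →L[ℂ] H) := by rw [hb]; abel
  have hX : ((b⁻¹ : (H →L[ℂ] H)ˣ) : H →L[ℂ] H) + c⁻¹ • (1 : H →L[ℂ] H)
      = c⁻¹ • (((b⁻¹ : (H →L[ℂ] H)ˣ) : H →L[ℂ] H) * a) := by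
    rw [hab, mul_add, Units.inv_mul, mul_smul_comm, mul_one, smul_add, smul_smul,
      inv_mul_cancel₀ hc0, one_smul, add_comm]
  have hu : c⁻¹ • (((b⁻¹ : (H →L[ℂ] H)ˣ) : H →L[ℂ] H) * a)
      = (((Units.mk0 c hc0)⁻¹ • (b⁻¹ * a) : (H →L[ℂ] H)ˣ) : H →L[ℂ] H) := by
    ext; simp [Units.smul_def]
  have hv : ((((Units.mk0 c hc0)⁻¹ • (b⁻¹ * a))⁻¹ : (H →L[ℂ] H)ˣ) : H →L[ℂ] H)
      = c • (1 : H →L[ℂ] H) - (c * c) • ((a⁻¹ : (H →L[ℂ] H)ˣ) : H →L[ℂ] H) := by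
    have h1 : (((a⁻¹ * b : (H →L[ℂ] H)ˣ)) : H →L[ℂ] H)
        = 1 - c • ((a⁻¹ : (H →L[ℂ] H)ˣ) : H →L[ℂ] H) := by
      rw [Units.val_mul, hb, mul_sub, Units.inv_mul, mul_smul_comm, mul_one]
    rw [← smul_smul, ← smul_sub, ← h1]
    apply Units.inv_eq_of_mul_eq_one_right
    rw [← hu, smul_mul_smul_comm, inv_mul_cancel₀ hc0, one_smul, ← Units.val_mul,
      ← Units.val_mul]
    simp [mul_assoc]
  rw [hX, hu, Ring.inverse_unit]
  refine ⟨Units.isUnit _, ?_⟩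
  rw [hv]
  have h1 : ‖c • (1 : H →L[ℂ] H)‖ ≤ ε := by
    rw [norm_smul, hcn]
    exact mul_le_of_le_one_right hεpos.le ContinuousLinearMap.norm_id_le
  have h2 : ‖(c * c) • ((a⁻¹ : (H →L[ℂ] H)ˣ) : H →L[ℂ] H)‖ ≤ ε := by
    rw [norm_smul, norm_mul, hcn]
    calc ε * ε * _ ≤ ε * ε * ε⁻¹ := by gcongr
      _ = ε := by field_simp
  linarith [norm_sub_le (c • (1 : H →L[ℂ] H)) ((c * c) • ((a⁻¹ : (H →L[ℂ] H)ˣ) : H →L[ℂ] H))]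
end
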